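/- arXiv:2206.13197 — 2 statements merged into one kernel-verified Lean document; each statement's English description precedes it below -/
import Mathlib

section
/- Let A be a unital complex Banach algebra. If A has no nontrivial idempotents, then the spectrum sp(a) of every element a ∈ A is a connected subset of ℂ. -/
/-!
For a compactly supported `C¹` function `φ` that is holomorphic near the spectrum of `a`, the
Cauchy–Pompeiu formula suggests defining `φ(a) = -π⁻¹ ∫ (∂φ/∂z̄)(z) (z - a)⁻¹`. For `w` in the
spectrum, `w - a` divides `φ(w) - φ(a)`, so `φ(w)` lies in the spectrum of `φ(a)`. By Stokes, `φ(a)`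
depends only on the values of `φ` near the spectrum.

If the spectrum is a union of two disjoint nonempty closed sets, let `φ` be a smooth cutoff equal to
`1` near the first and `0` near the second, and let `ψ` be another such cutoff that is moreover `1`
near the support of `φ`. Fubini and Cauchy–Pompeiu give `φ(a) ψ(a) = φ(a)`, and `ψ(a) = φ(a)`, so
`φ(a)` is an idempotent. It is nontrivial because its spectrum contains both `0` and `1`.
-/

open Complex Filter Function MeasureTheory Set Topology
open scoped Manifold Real

section Dbar

variable {E : Type*} [NormedAddCommGroup E] [NormedSpace ℂ E] {f g : ℂ → E} {z : ℂ}

/-- The Wirtinger derivative `∂f/∂z̄ = (∂f/∂x + i ∂f/∂y) / 2`, with the junk value `0` where `f` is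
not real differentiable. -/
noncomputable def dbar (f : ℂ → E) (z : ℂ) : E :=
  (2⁻¹ : ℂ) • (fderiv ℝ f z 1 + I • fderiv ℝ f z I)

lemma tsupport_dbar_subset : tsupport (dbar f) ⊆ tsupport f :=
  (tsupport_comp_subset (g := fun L : ℂ →L[ℝ] E ↦ (2⁻¹ : ℂ) • (L 1 + I • L I)) (by simp) _).trans
    (tsupport_fderiv_subset ℝ)

lemma hasCompactSupport_dbar (hf : HasCompactSupport f) : HasCompactSupport (dbar f) :=
  hf.of_isClosed_subset (isClosed_tsupport _) tsupport_dbar_subset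

lemma continuous_dbar (hf : ContDiff ℝ 1 f) : Continuous (dbar f) := by
  have := hf.continuous_fderiv one_ne_zero
  unfold dbar
  fun_prop

lemma dbar_eq_zero_of_eventually_eq_const {c : E} (h : ∀ᶠ y in 𝓝 z, f y = c) : dbar f z = 0 := by
  have hfderiv : fderiv ℝ f z = 0 := by
    rw [EventuallyEq.fderiv_eq (f := fun _ ↦ c) h, fderiv_const_apply]
  simp [dbar, hfderiv]

lemma notMem_tsupport_dbar_of_eventually_eq_const {c : E} (h : ∀ᶠ y in 𝓝 z, f y = c) :
    z ∉ tsupport (dbar f) := by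
  refine notMem_tsupport_iff_eventuallyEq.2 ?_
  filter_upwards [eventually_eventually_nhds.2 h] with y hy
  exact dbar_eq_zero_of_eventually_eq_const hy

lemma disjoint_tsupport_dbar_of_eventually_eq_const {s : Set ℂ} {c : E}
    (h : ∀ᶠ y in 𝓝ˢ s, f y = c) : Disjoint (tsupport (dbar f)) s :=
  disjoint_right.2 fun _ hz ↦
    notMem_tsupport_dbar_of_eventually_eq_const (h.filter_mono (nhds_le_nhdsSet hz))

lemma dbar_sub (hf : DifferentiableAt ℝ f z) (hg : DifferentiableAt ℝ g z) :
    dbar (fun y ↦ f y - g y) z = dbar f z - dbar g z := by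
  simp only [dbar, fderiv_fun_sub hf hg, sub_apply]
  module

lemma dbar_comp_add_right (w : ℂ) : dbar (fun y ↦ f (y + w)) z = dbar f (z + w) := by
  simp only [dbar, fderiv_comp_add_right]

lemma dbar_smul_of_differentiableAt {φ : ℂ → ℂ} (hφ : DifferentiableAt ℝ φ z)
    (hf : DifferentiableAt ℂ f z) : dbar (fun y ↦ φ y • f y) z = dbar φ z • f z := by
  have hfI : fderiv ℝ f z I = I • fderiv ℝ f z 1 := by
    rw [hf.fderiv_restrictScalars ℝ]
    simp
  simp only [dbar, fderiv_fun_smul hφ (hf.restrictScalars ℝ), add_apply, smul_apply,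
    ContinuousLinearMap.smulRight_apply, hfI, smul_eq_mul]
  linear_combination (norm := module) ((φ z / 2) * I_mul_I) • fderiv ℝ f z 1

lemma conj_smul_dbar (f : ℂ → E) (z u : ℂ) :
    (starRingEnd ℂ) u • dbar f z = (2⁻¹ : ℂ) • (fderiv ℝ f z u + I • fderiv ℝ f z (I * u)) := by
  have hfderiv (v : ℂ) : fderiv ℝ f z v = v.re • fderiv ℝ f z 1 + v.im • fderiv ℝ f z I := by
    rw [← map_smul, ← map_smul, ← map_add]
    simp [re_add_im]
  rw [hfderiv u, hfderiv (I * u), dbar]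
  have hconj : (starRingEnd ℂ) u = u.re - u.im * I := by simp [Complex.ext_iff]
  simp only [hconj, I_mul_re, I_mul_im, ← coe_smul, ofReal_neg]
  linear_combination (norm := module) ((-u.im / 2 : ℂ) * I_mul_I) • fderiv ℝ f z I

lemma integral_dbar (hf : ContDiff ℝ 1 f) (hfc : HasCompactSupport f) : ∫ z, dbar f z = 0 := by
  have hint (v : ℂ) : Integrable fun z ↦ fderiv ℝ f z v :=
    ((hf.continuous_fderiv one_ne_zero).clm_apply continuous_const).integrable_of_hasCompactSupport
      (hfc.fderiv_apply ℝ v)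
  have hzero (v : ℂ) : ∫ z, fderiv ℝ f z v = 0 := by
    simpa using integral_smul_fderiv_eq_neg_fderiv_smul_of_integrable (μ := volume)
      (f := fun _ : ℂ ↦ (1 : ℝ)) (g := f) (v := v) (by simp) (by simpa using hint v)
      (by simpa using hf.continuous.integrable_of_hasCompactSupport hfc)
      (fun _ _ ↦ by fun_prop) (fun z _ ↦ hf.differentiable one_ne_zero z)
  calc ∫ z, dbar f z = (2⁻¹ : ℂ) • ((∫ z, fderiv ℝ f z 1) + I • ∫ z, fderiv ℝ f z I) := by
        simp only [dbar]
        rw [integral_smul, integral_add (hint 1) ((hint I).fun_smul I), integral_smul]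
    _ = 0 := by simp [hzero]

end Dbar

section CauchyPompeiu

variable {E : Type*} [NormedAddCommGroup E] [NormedSpace ℂ E] {f : ℂ → E}

lemma integral_inv_smul_eq_integral_polar (g : ℂ → E) :
    ∫ z, z⁻¹ • g z =
      ∫ p in Ioi (0 : ℝ) ×ˢ Ioo (-π) π,
        (starRingEnd ℂ) (exp (p.2 * I)) • g (p.1 * exp (p.2 * I)) := by
  rw [← Complex.integral_comp_polarCoord_symm, polarCoord_target]
  refine setIntegral_congr_fun (measurableSet_Ioi.prod measurableSet_Ioo) fun p hp ↦ ?_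
  have hr : (p.1 : ℂ) ≠ 0 := ofReal_ne_zero.2 (ne_of_gt hp.1)
  have hsymm : Complex.polarCoord.symm p = p.1 * exp (p.2 * I) := by
    rw [Complex.polarCoord_symm_apply, exp_mul_I, ofReal_cos, ofReal_sin]
  have hconj : (starRingEnd ℂ) (exp (p.2 * I)) = (exp (p.2 * I))⁻¹ := by
    rw [← exp_conj, ← exp_neg]; simp
  simp only [hsymm, hconj]
  rw [← coe_smul, smul_smul, mul_inv, mul_inv_cancel_left₀ hr]

lemma integrableOn_fderiv_polar (hf : ContDiff ℝ 1 f) (hfc : HasCompactSupport f) {v : ℝ → ℂ}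
    (hv : Continuous v) :
    IntegrableOn (fun p : ℝ × ℝ ↦ fderiv ℝ f (p.1 * exp (p.2 * I)) (v p.2))
      (Ioi 0 ×ˢ Ioo (-π) π) := by
  obtain ⟨R, hR⟩ := (hfc.fderiv ℝ).isCompact.isBounded.subset_closedBall 0
  have hzero (p : ℝ × ℝ) (hp : R < |p.1|) : fderiv ℝ f (p.1 * exp (p.2 * I)) = 0 := by
    refine image_eq_zero_of_notMem_tsupport fun hmem ↦ hp.not_ge ?_
    simpa using hR hmem
  have hcont : Continuous fun p : ℝ × ℝ ↦ fderiv ℝ f (p.1 * exp (p.2 * I)) (v p.2) := by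
    have := hf.continuous_fderiv one_ne_zero
    fun_prop
  have hcompact : IntegrableOn (fun p : ℝ × ℝ ↦ fderiv ℝ f (p.1 * exp (p.2 * I)) (v p.2))
      (Icc (-R) R ×ˢ Icc (-π) π) :=
    hcont.continuousOn.integrableOn_compact (isCompact_Icc.prod isCompact_Icc)
  refine hcompact.of_forall_sdiff_eq_zero (measurableSet_Ioi.prod measurableSet_Ioo) fun p hp ↦ ?_
  have hlt : R < |p.1| := by
    by_contra! hle
    exact hp.2 ⟨abs_le.1 hle, Ioo_subset_Icc_self hp.1.2⟩
  simp [hzero p hlt]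

variable [CompleteSpace E]

lemma integral_Ioi_fderiv_ray (hf : ContDiff ℝ 1 f) (hfc : HasCompactSupport f) {u : ℂ}
    (hu : u ≠ 0) : ∫ r in Ioi (0 : ℝ), fderiv ℝ f (r * u) u = -f 0 := by
  have hderiv (r : ℝ) : HasDerivAt (fun r : ℝ ↦ f (r * u)) (fderiv ℝ f (r * u) u) r := by
    have hline : HasDerivAt (fun r : ℝ ↦ (r : ℂ) * u) u r := by
      simpa using (ofRealCLM.hasDerivAt (x := r)).mul_const u
    exact (hf.differentiable one_ne_zero _).hasFDerivAt.comp_hasDerivAt r hline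
  have hray : IsClosedEmbedding fun r : ℝ ↦ (r : ℂ) * u :=
    (Homeomorph.mulRight₀ u hu).isClosedEmbedding.comp isometry_ofReal.isClosedEmbedding
  simpa [comp_def, (hderiv _).deriv] using
    (hfc.comp_isClosedEmbedding hray).integral_Ioi_deriv_eq
      (hf.comp (ofRealCLM.contDiff.mul contDiff_const)) 0

lemma integral_fderiv_circle (hf : ContDiff ℝ 1 f) {r : ℝ} (hr : r ≠ 0) :
    ∫ θ in Ioo (-π) π, fderiv ℝ f (r * exp (θ * I)) (I * exp (θ * I)) = 0 := by
  have hderiv (θ : ℝ) : HasDerivAt (fun θ : ℝ ↦ f (circleMap 0 r θ))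
      (r • fderiv ℝ f (r * exp (θ * I)) (I * exp (θ * I))) θ := by
    have h := (hf.differentiable one_ne_zero _).hasFDerivAt.comp_hasDerivAt θ
      (hasDerivAt_circleMap 0 r θ)
    rwa [circleMap_zero, mul_assoc, mul_comm (exp _), ← real_smul (z := I * _), map_smul] at h
  have hcont : Continuous fun θ : ℝ ↦
      r • fderiv ℝ f (r * exp (θ * I)) (I * exp (θ * I)) := by
    have := hf.continuous_fderiv one_ne_zero
    fun_prop
  have h := intervalIntegral.integral_eq_sub_of_hasDerivAt (fun θ _ ↦ hderiv θ)
    (hcont.intervalIntegrable (-π) π)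
  have hperiod : circleMap 0 r π = circleMap 0 r (-π) := by
    simpa [two_mul] using periodic_circleMap 0 r (-π)
  rw [hperiod, sub_self, intervalIntegral.integral_smul, smul_eq_zero_iff_right hr,
    intervalIntegral.integral_of_le (by linarith [Real.pi_pos]), integral_Ioc_eq_integral_Ioo] at h
  exact h

lemma integral_inv_smul_dbar (hf : ContDiff ℝ 1 f) (hfc : HasCompactSupport f) :
    ∫ z, z⁻¹ • dbar f z = -(π : ℂ) • f 0 := by
  have hradial := integrableOn_fderiv_polar hf hfc (v := fun θ ↦ exp (θ * I)) (by fun_prop)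
  have hangular := integrableOn_fderiv_polar hf hfc (v := fun θ ↦ I * exp (θ * I)) (by fun_prop)
  have hradial_integral :
      ∫ p in Ioi (0 : ℝ) ×ˢ Ioo (-π) π, fderiv ℝ f (p.1 * exp (p.2 * I)) (exp (p.2 * I)) =
        -(2 * π : ℂ) • f 0 := by
    rw [Measure.volume_eq_prod, ← setIntegral_prod_swap]
    refine (setIntegral_prod _ hradial.swap).trans ?_
    simp only [comp_apply, Prod.swap_prod_mk, integral_Ioi_fderiv_ray hf hfc (exp_ne_zero _),
      setIntegral_const, Real.volume_real_Ioo_of_le (show -π ≤ π by linarith [Real.pi_pos])]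
    rw [← coe_smul]
    push_cast
    module
  have hangular_integral :
      ∫ p in Ioi (0 : ℝ) ×ˢ Ioo (-π) π,
        fderiv ℝ f (p.1 * exp (p.2 * I)) (I * exp (p.2 * I)) = 0 := by
    rw [Measure.volume_eq_prod, setIntegral_prod _ hangular]
    exact setIntegral_eq_zero_of_forall_eq_zero fun r hr ↦ integral_fderiv_circle hf (ne_of_gt hr)
  rw [integral_inv_smul_eq_integral_polar]
  simp only [conj_smul_dbar]
  rw [integral_smul, integral_add hradial (hangular.fun_smul I), integral_smul, hradial_integral,
    hangular_integral]
  module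

theorem cauchy_pompeiu (hf : ContDiff ℝ 1 f) (hfc : HasCompactSupport f) (w : ℂ) :
    ∫ z, (w - z)⁻¹ • dbar f z = (π : ℂ) • f w := by
  have hzero := integral_inv_smul_dbar (f := fun z ↦ f (z + w))
    (hf.comp (contDiff_id.add contDiff_const)) (hfc.comp_homeomorph (Homeomorph.addRight w))
  simp only [dbar_comp_add_right, zero_add] at hzero
  calc ∫ z, (w - z)⁻¹ • dbar f z = ∫ z, (w - (z + w))⁻¹ • dbar f (z + w) :=
        (integral_add_right_eq_self (fun z ↦ (w - z)⁻¹ • dbar f z) w).symm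
    _ = -∫ z, z⁻¹ • dbar f (z + w) := by
        rw [← integral_neg]
        simp [inv_neg]
    _ = (π : ℂ) • f w := by rw [hzero, neg_smul, neg_neg]

end CauchyPompeiu

section CauchyKernel

variable {E : Type*} [NormedAddCommGroup E] [NormedSpace ℂ E] {k : ℂ → ℂ} {g : ℂ → E}

lemma continuous_inv_sub_mul {w : ℂ} (hk : Continuous k) (hw : w ∉ tsupport k) :
    Continuous fun z ↦ (w - z)⁻¹ * k z := by
  refine continuous_of_tsupport fun z hz ↦ ?_
  have hwz : w - z ≠ 0 := sub_ne_zero.2 fun h ↦ hw (h ▸ tsupport_mul_subset_right hz)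
  exact (ContinuousAt.inv₀ (by fun_prop) hwz).mul hk.continuousAt

lemma tsupport_uncurry_inv_sub_smul_subset (k : ℂ → ℂ) (g : ℂ → E) :
    tsupport (uncurry fun w z ↦ ((w - z)⁻¹ * k w) • g z) ⊆ tsupport k ×ˢ tsupport g := by
  refine closure_minimal (fun p hp ↦ ?_) ((isClosed_tsupport k).prod (isClosed_tsupport g))
  have hne : ((p.1 - p.2)⁻¹ * k p.1) • g p.2 ≠ 0 := hp
  exact ⟨subset_tsupport _ (right_ne_zero_of_mul (left_ne_zero_of_smul hne)),
    subset_tsupport _ (right_ne_zero_of_smul hne)⟩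

lemma continuous_uncurry_inv_sub_smul (hk : Continuous k) (hg : Continuous g)
    (hkg : Disjoint (tsupport k) (tsupport g)) :
    Continuous (uncurry fun w z ↦ ((w - z)⁻¹ * k w) • g z) := by
  refine continuous_of_tsupport fun p hp ↦ ?_
  obtain ⟨hpk, hpg⟩ := tsupport_uncurry_inv_sub_smul_subset k g hp
  have hne : p.1 - p.2 ≠ 0 := sub_ne_zero.2 (hkg.ne_of_mem hpk hpg)
  simp only [uncurry_def]
  fun_prop (disch := exact hne)

lemma integral_smul_integral_inv_sub_smul [CompleteSpace E] (hk : Continuous k)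
    (hkc : HasCompactSupport k) (hg : Continuous g) (hgc : HasCompactSupport g)
    (hkg : Disjoint (tsupport k) (tsupport g)) :
    ∫ w, k w • ∫ z, (w - z)⁻¹ • g z = -∫ z, (∫ w, (z - w)⁻¹ * k w) • g z := by
  have hneg (w z : ℂ) : (w - z)⁻¹ * k w = -((z - w)⁻¹ * k w) := by
    rw [← neg_sub z w, inv_neg, neg_mul]
  have hcompact : HasCompactSupport (uncurry fun w z ↦ ((w - z)⁻¹ * k w) • g z) :=
    (hkc.isCompact.prod hgc.isCompact).of_isClosed_subset (isClosed_tsupport _)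
      (tsupport_uncurry_inv_sub_smul_subset k g)
  calc ∫ w, k w • ∫ z, (w - z)⁻¹ • g z = ∫ w, ∫ z, ((w - z)⁻¹ * k w) • g z := by
        simp only [← integral_smul, smul_smul, mul_comm (k _)]
    _ = ∫ z, ∫ w, ((w - z)⁻¹ * k w) • g z :=
        integral_integral_swap_of_hasCompactSupport
          (continuous_uncurry_inv_sub_smul hk hg hkg) hcompact
    _ = -∫ z, (∫ w, (z - w)⁻¹ * k w) • g z := by
        simp only [hneg, integral_smul_const, integral_neg, neg_smul]

lemma integral_dbar_smul_integral_inv_sub_smul [CompleteSpace E] {ψ : ℂ → ℂ}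
    (hψ : ContDiff ℝ 1 ψ) (hψc : HasCompactSupport ψ) (hg : Continuous g)
    (hgc : HasCompactSupport g) (h : ∀ᶠ z in 𝓝ˢ (tsupport g), ψ z = 1) :
    ∫ w, dbar ψ w • ∫ z, (w - z)⁻¹ • g z = -(π : ℂ) • ∫ z, g z := by
  have hpompeiu (z : ℂ) : (∫ w, (z - w)⁻¹ * dbar ψ w) • g z = (π : ℂ) • g z := by
    by_cases hz : z ∈ tsupport g
    · have hint : ∫ w, (z - w)⁻¹ * dbar ψ w = π * ψ z := cauchy_pompeiu hψ hψc z
      rw [hint, h.self_of_nhdsSet z hz, mul_one]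
    · simp [image_eq_zero_of_notMem_tsupport hz]
  rw [integral_smul_integral_inv_sub_smul (continuous_dbar hψ) (hasCompactSupport_dbar hψc) hg hgc
    (disjoint_tsupport_dbar_of_eventually_eq_const h)]
  simp only [hpompeiu, integral_smul, neg_smul]

end CauchyKernel

section Resolvent

lemma commute_resolvent {R A : Type*} [CommRing R] [Ring A] [Algebra R A] (a : A) (z : R) :
    Commute a (resolvent a z) := by
  have hcomm : Commute a (algebraMap R A z - a) :=
    (Algebra.commute_algebraMap_right z a).sub_right (Commute.refl a)
  rw [resolvent]
  by_cases hz : IsUnit (algebraMap R A z - a)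
  · obtain ⟨u, hu⟩ := hz
    rw [← hu] at hcomm ⊢
    rw [Ring.inverse_unit]
    exact hcomm.units_inv_right
  · rw [Ring.inverse_non_unit _ hz]
    exact Commute.zero_right a

lemma algebraMap_sub_mul_resolvent {R A : Type*} [CommRing R] [Ring A] [Algebra R A] {a : A} {z : R}
    (hz : z ∈ resolventSet R a) (w : R) :
    (algebraMap R A w - a) * resolvent a z = (w - z) • resolvent a z + 1 := by
  have hcancel : (algebraMap R A z - a) * resolvent a z = 1 := Ring.mul_inverse_cancel _ hz
  rw [← hcancel, Algebra.smul_def, map_sub]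
  noncomm_ring

variable {A : Type*} [NormedRing A] [NormedAlgebra ℂ A] {a : A} {k : ℂ → ℂ}

lemma commute_integral_smul_resolvent (hint : Integrable fun z ↦ k z • resolvent a z) :
    Commute a (∫ z, k z • resolvent a z) := by
  rw [commute_iff_eq, ← integral_const_mul_of_integrable hint,
    ← integral_mul_const_of_integrable hint]
  simp only [mul_smul_comm, smul_mul_assoc, (commute_resolvent a _).eq]

variable [CompleteSpace A]

lemma differentiableOn_resolvent (a : A) :
    DifferentiableOn ℂ (resolvent a : ℂ → A) (resolventSet ℂ a) := fun _ hz ↦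
  (spectrum.hasDerivAt_resolvent_const_left hz).differentiableAt.differentiableWithinAt

lemma contDiff_smul_resolvent {n : WithTop ℕ∞} (hk : ContDiff ℝ n k)
    (hka : tsupport k ⊆ resolventSet ℂ a) : ContDiff ℝ n fun z ↦ k z • resolvent a z := by
  refine contDiff_iff_contDiffAt.2 fun z ↦ ?_
  by_cases hz : z ∈ tsupport k
  · have hopen := spectrum.isOpen_resolventSet (𝕜 := ℂ) a
    exact hk.contDiffAt.smul ((((differentiableOn_resolvent a).contDiffOn hopen).contDiffAt
      (hopen.mem_nhds (hka hz))).restrict_scalars ℝ)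
  · refine (contDiffAt_const (c := (0 : A))).congr_of_eventuallyEq ?_
    filter_upwards [notMem_tsupport_iff_eventuallyEq.1 hz] with y hy
    rw [hy, Pi.zero_apply, zero_smul]

lemma continuous_smul_resolvent (hk : Continuous k) (hka : tsupport k ⊆ resolventSet ℂ a) :
    Continuous fun z ↦ k z • resolvent a z :=
  continuous_of_tsupport fun _ hz ↦ hk.continuousAt.smul
    (spectrum.hasDerivAt_resolvent_const_left (hka (tsupport_smul_subset_left _ _ hz))).continuousAt

lemma integrable_smul_resolvent (hk : Continuous k) (hkc : HasCompactSupport k)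
    (hka : tsupport k ⊆ resolventSet ℂ a) : Integrable fun z ↦ k z • resolvent a z :=
  (continuous_smul_resolvent hk hka).integrable_of_hasCompactSupport hkc.smul_right

lemma dbar_smul_resolvent {z : ℂ} (hk : DifferentiableAt ℝ k z) (hz : z ∈ resolventSet ℂ a) :
    dbar (fun y ↦ k y • resolvent a y) z = dbar k z • resolvent a z :=
  dbar_smul_of_differentiableAt hk (spectrum.hasDerivAt_resolvent_const_left hz).differentiableAt

end Resolvent

section HolomorphicCalculus

variable {A : Type*} [NormedRing A] [NormedAlgebra ℂ A] {a : A} {φ ψ : ℂ → ℂ} {w : ℂ}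

/-- Compactly supported `C¹` functions that are holomorphic on a neighbourhood of the spectrum of
`a`, holomorphy being expressed as the vanishing of `dbar φ`. -/
structure IsHolomorphicNearSpectrum (a : A) (φ : ℂ → ℂ) : Prop where
  contDiff : ContDiff ℝ 1 φ
  hasCompactSupport : HasCompactSupport φ
  tsupport_dbar_subset_resolventSet : tsupport (dbar φ) ⊆ resolventSet ℂ a

/-- The holomorphic functional calculus `φ(a)`, obtained by substituting
`resolvent a z = (z - a)⁻¹` for `(z - w)⁻¹` in the Cauchy–Pompeiu formula instead of using a contour
integral. It is meaningful for `φ` with `IsHolomorphicNearSpectrum a φ`. -/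
noncomputable def holomorphicCalculus (a : A) (φ : ℂ → ℂ) : A :=
  -(π : ℂ)⁻¹ • ∫ z, dbar φ z • resolvent a z

lemma holomorphicCalculus_eq_zero [CompleteSpace A] (hφ : ContDiff ℝ 1 φ)
    (hφc : HasCompactSupport φ) (hφa : tsupport φ ⊆ resolventSet ℂ a) :
    holomorphicCalculus a φ = 0 := by
  have hdbar (z : ℂ) : dbar (fun y ↦ φ y • resolvent a y) z = dbar φ z • resolvent a z := by
    by_cases hz : z ∈ tsupport φ
    · exact dbar_smul_resolvent (hφ.differentiable one_ne_zero z) (hφa hz)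
    · rw [image_eq_zero_of_notMem_tsupport fun h ↦
          hz (tsupport_smul_subset_left _ _ (tsupport_dbar_subset h)),
        image_eq_zero_of_notMem_tsupport fun h ↦ hz (tsupport_dbar_subset h), zero_smul]
  simp only [holomorphicCalculus, ← hdbar,
    integral_dbar (contDiff_smul_resolvent hφ hφa) hφc.smul_right, smul_zero]

namespace IsHolomorphicNearSpectrum

variable [CompleteSpace A]

lemma integrable (hφ : IsHolomorphicNearSpectrum a φ) :
    Integrable fun z ↦ dbar φ z • resolvent a z :=
  integrable_smul_resolvent (continuous_dbar hφ.contDiff)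
    (hasCompactSupport_dbar hφ.hasCompactSupport) hφ.tsupport_dbar_subset_resolventSet

lemma integrable_inv_sub_mul (hφ : IsHolomorphicNearSpectrum a φ) (hw : w ∉ tsupport (dbar φ)) :
    Integrable fun z ↦ ((w - z)⁻¹ * dbar φ z) • resolvent a z :=
  integrable_smul_resolvent (continuous_inv_sub_mul (continuous_dbar hφ.contDiff) hw)
    (hasCompactSupport_dbar hφ.hasCompactSupport).mul_left
    (tsupport_mul_subset_right.trans hφ.tsupport_dbar_subset_resolventSet)

lemma algebraMap_sub_holomorphicCalculus (hφ : IsHolomorphicNearSpectrum a φ)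
    (hw : w ∉ tsupport (dbar φ)) :
    algebraMap ℂ A (φ w) - holomorphicCalculus a φ =
      (algebraMap ℂ A w - a) *
        ((π : ℂ)⁻¹ • ∫ z, ((w - z)⁻¹ * dbar φ z) • resolvent a z) := by
  have hpointwise (z : ℂ) :
      (algebraMap ℂ A w - a) * ((w - z)⁻¹ * dbar φ z) • resolvent a z =
        dbar φ z • resolvent a z + ((w - z)⁻¹ * dbar φ z) • 1 := by
    by_cases hz : z ∈ tsupport (dbar φ)
    · have hwz : w - z ≠ 0 := sub_ne_zero.2 fun h ↦ hw (h ▸ hz)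
      rw [mul_smul_comm,
        algebraMap_sub_mul_resolvent (hφ.tsupport_dbar_subset_resolventSet hz), smul_add, smul_smul,
        mul_right_comm, inv_mul_cancel₀ hwz, one_mul]
    · simp [image_eq_zero_of_notMem_tsupport hz]
  have hkernel : Integrable fun z ↦ (w - z)⁻¹ * dbar φ z :=
    (continuous_inv_sub_mul (continuous_dbar hφ.contDiff) hw).integrable_of_hasCompactSupport
      (hasCompactSupport_dbar hφ.hasCompactSupport).mul_left
  have hpompeiu : ∫ z, (w - z)⁻¹ * dbar φ z = π * φ w :=
    cauchy_pompeiu hφ.contDiff hφ.hasCompactSupport w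
  have hπ : (π : ℂ) ≠ 0 := ofReal_ne_zero.2 Real.pi_ne_zero
  rw [mul_smul_comm, ← integral_const_mul_of_integrable (hφ.integrable_inv_sub_mul hw)]
  simp only [hpointwise]
  rw [integral_add hφ.integrable (hkernel.smul_const 1), integral_smul_const, hpompeiu,
    holomorphicCalculus, smul_add, smul_smul, inv_mul_cancel_left₀ hπ,
    Algebra.algebraMap_eq_smul_one]
  module

lemma commute_algebraMap_sub_integral (hφ : IsHolomorphicNearSpectrum a φ)
    (hw : w ∉ tsupport (dbar φ)) :
    Commute (algebraMap ℂ A w - a)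
      ((π : ℂ)⁻¹ • ∫ z, ((w - z)⁻¹ * dbar φ z) • resolvent a z) :=
  (Commute.sub_left (Algebra.commute_algebraMap_left _ _)
    (commute_integral_smul_resolvent (hφ.integrable_inv_sub_mul hw))).smul_right _

theorem apply_mem_spectrum_holomorphicCalculus (hφ : IsHolomorphicNearSpectrum a φ)
    (hw : w ∈ spectrum ℂ a) : φ w ∈ spectrum ℂ (holomorphicCalculus a φ) := by
  have hw' : w ∉ tsupport (dbar φ) := fun h ↦ hw (hφ.tsupport_dbar_subset_resolventSet h)
  rw [spectrum.mem_iff, hφ.algebraMap_sub_holomorphicCalculus hw',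
    (hφ.commute_algebraMap_sub_integral hw').isUnit_mul_iff]
  exact fun h ↦ spectrum.mem_iff.1 hw h.1

lemma holomorphicCalculus_mul_resolvent (hφ : IsHolomorphicNearSpectrum a φ)
    (hw : w ∈ resolventSet ℂ a) (hwφ : w ∉ tsupport φ) :
    holomorphicCalculus a φ * resolvent a w =
      -(π : ℂ)⁻¹ • ∫ z, ((w - z)⁻¹ * dbar φ z) • resolvent a z := by
  have hwφ' : w ∉ tsupport (dbar φ) := fun h ↦ hwφ (tsupport_dbar_subset h)
  have hcalc := hφ.algebraMap_sub_holomorphicCalculus hwφ'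
  rw [image_eq_zero_of_notMem_tsupport hwφ, map_zero, zero_sub, neg_eq_iff_eq_neg,
    (hφ.commute_algebraMap_sub_integral hwφ').eq] at hcalc
  have hcancel : (algebraMap ℂ A w - a) * resolvent a w = 1 := Ring.mul_inverse_cancel _ hw
  rw [hcalc, neg_mul, mul_assoc, hcancel, mul_one, neg_smul]

lemma holomorphicCalculus_congr (hφ : IsHolomorphicNearSpectrum a φ)
    (hψ : IsHolomorphicNearSpectrum a ψ) (h : φ =ᶠ[𝓝ˢ (spectrum ℂ a)] ψ) :
    holomorphicCalculus a φ = holomorphicCalculus a ψ := by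
  have hsupp : tsupport (fun z ↦ φ z - ψ z) ⊆ resolventSet ℂ a := by
    intro z hz
    by_contra hza
    refine notMem_tsupport_iff_eventuallyEq.2 ?_ hz
    filter_upwards [h.filter_mono (nhds_le_nhdsSet hza)] with y hy
    simp [hy]
  have hdbar (z : ℂ) : dbar (fun y ↦ φ y - ψ y) z = dbar φ z - dbar ψ z :=
    dbar_sub (hφ.contDiff.differentiable one_ne_zero z) (hψ.contDiff.differentiable one_ne_zero z)
  have hzero := holomorphicCalculus_eq_zero (hφ.contDiff.sub hψ.contDiff)
    (hφ.hasCompactSupport.sub hψ.hasCompactSupport) hsupp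
  simp only [holomorphicCalculus, hdbar, sub_smul] at hzero
  rwa [integral_sub hφ.integrable hψ.integrable, smul_sub, sub_eq_zero] at hzero

theorem holomorphicCalculus_mul_eq_left (hφ : IsHolomorphicNearSpectrum a φ)
    (hψ : IsHolomorphicNearSpectrum a ψ) (h : ∀ᶠ z in 𝓝ˢ (tsupport φ), ψ z = 1) :
    holomorphicCalculus a φ * holomorphicCalculus a ψ = holomorphicCalculus a φ := by
  have hdisj : Disjoint (tsupport (dbar ψ)) (tsupport φ) :=
    disjoint_tsupport_dbar_of_eventually_eq_const h
  have hπ : (π : ℂ) ≠ 0 := ofReal_ne_zero.2 Real.pi_ne_zero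
  have hmul (w : ℂ) : holomorphicCalculus a φ * dbar ψ w • resolvent a w =
      -(π : ℂ)⁻¹ • dbar ψ w • ∫ z, (w - z)⁻¹ • dbar φ z • resolvent a z := by
    by_cases hw : w ∈ tsupport (dbar ψ)
    · simp only [mul_smul_comm, hφ.holomorphicCalculus_mul_resolvent
        (hψ.tsupport_dbar_subset_resolventSet hw) (hdisj.notMem_of_mem_left hw), mul_smul]
      rw [smul_comm]
    · simp [image_eq_zero_of_notMem_tsupport hw]
  have hsupp : tsupport (fun z ↦ dbar φ z • resolvent a z) ⊆ tsupport φ :=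
    (tsupport_smul_subset_left _ _).trans tsupport_dbar_subset
  have hswap := integral_dbar_smul_integral_inv_sub_smul hψ.contDiff hψ.hasCompactSupport
    (continuous_smul_resolvent (continuous_dbar hφ.contDiff) hφ.tsupport_dbar_subset_resolventSet)
    (hasCompactSupport_dbar hφ.hasCompactSupport).smul_right
    (h.filter_mono (nhdsSet_mono hsupp))
  calc holomorphicCalculus a φ * holomorphicCalculus a ψ
      = -(π : ℂ)⁻¹ • ∫ w, holomorphicCalculus a φ * dbar ψ w • resolvent a w := by
        rw [integral_const_mul_of_integrable hψ.integrable, ← mul_smul_comm, holomorphicCalculus,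
          holomorphicCalculus]
    _ = -(π : ℂ)⁻¹ • -(π : ℂ)⁻¹ • -(π : ℂ) • ∫ z, dbar φ z • resolvent a z := by
        simp only [hmul, integral_smul, hswap]
    _ = holomorphicCalculus a φ := by
        rw [holomorphicCalculus, ← inv_neg, inv_smul_smul₀ (neg_ne_zero.2 hπ)]

end IsHolomorphicNearSpectrum

end HolomorphicCalculus

section Idempotents

lemma exists_contDiff_hasCompactSupport_eventually_eq_one {E : Type*} [NormedAddCommGroup E]
    [NormedSpace ℝ E] [FiniteDimensional ℝ E] {K U : Set E} (hK : IsCompact K) (hU : IsOpen U)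
    (hKU : K ⊆ U) (n : ℕ∞) :
    ∃ φ : E → ℂ, ContDiff ℝ n φ ∧ HasCompactSupport φ ∧ tsupport φ ⊆ U ∧
      ∀ᶠ z in 𝓝ˢ K, φ z = 1 := by
  obtain ⟨L, hL, hKL, hLU⟩ := exists_compact_between hK hU hKU
  obtain ⟨f, hf_one, hf_zero, -⟩ :=
    exists_contMDiffMap_one_nhds_of_subset_interior (n := n) 𝓘(ℝ, E) hK.isClosed hKL
  have hsupp : tsupport (fun z ↦ (f z : ℂ)) ⊆ L :=
    closure_minimal (fun z hz ↦ by_contra fun hzL ↦ hz (by simp [hf_zero z hzL])) hL.isClosed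
  exact ⟨fun z ↦ f z, ofRealCLM.contDiff.comp f.contMDiff.contDiff,
    hL.of_isClosed_subset (isClosed_tsupport _) hsupp, hsupp.trans hLU,
    hf_one.mono fun z hz ↦ by simp [hz]⟩

variable {A : Type*} [NormedRing A] [NormedAlgebra ℂ A] {a : A}

lemma isHolomorphicNearSpectrum_of_eventually_eq_const {φ : ℂ → ℂ} (hφ : ContDiff ℝ 1 φ)
    (hφc : HasCompactSupport φ) (h : ∀ z ∈ spectrum ℂ a, ∃ c, ∀ᶠ y in 𝓝 z, φ y = c) :
    IsHolomorphicNearSpectrum a φ where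
  contDiff := hφ
  hasCompactSupport := hφc
  tsupport_dbar_subset_resolventSet z hz := by
    by_contra hza
    obtain ⟨c, hc⟩ := h z hza
    exact notMem_tsupport_dbar_of_eventually_eq_const hc hz

variable [CompleteSpace A]

theorem isIdempotentElem_holomorphicCalculus {φ : ℂ → ℂ} (hφ : ContDiff ℝ 1 φ)
    (hφc : HasCompactSupport φ)
    (h : ∀ z ∈ spectrum ℂ a, (∀ᶠ y in 𝓝 z, φ y = 0) ∨ ∀ᶠ y in 𝓝 z, φ y = 1) :
    IsIdempotentElem (holomorphicCalculus a φ) := by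
  have hφ_supp : tsupport φ ⊆ (spectrum ℂ a ∩ φ ⁻¹' {0})ᶜ := by
    rintro z hz ⟨hza, hφz⟩
    rcases h z hza with hzero | hone
    · exact notMem_tsupport_iff_eventuallyEq.2 hzero hz
    · exact zero_ne_one (hφz.symm.trans hone.self_of_nhds)
  obtain ⟨ψ, hψ, hψc, hψ_supp, hψφ⟩ := exists_contDiff_hasCompactSupport_eventually_eq_one
    hφc.isCompact
    ((spectrum.isClosed a).inter (isClosed_singleton.preimage hφ.continuous)).isOpen_compl
    hφ_supp 1
  have hconst (z : ℂ) (hz : z ∈ spectrum ℂ a) :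
      ∃ c, (∀ᶠ y in 𝓝 z, φ y = c) ∧ ∀ᶠ y in 𝓝 z, ψ y = c := by
    rcases h z hz with hzero | hone
    · exact ⟨0, hzero, notMem_tsupport_iff_eventuallyEq.1 fun hzψ ↦
        hψ_supp hzψ ⟨hz, hzero.self_of_nhds⟩⟩
    · have hzφ : z ∈ tsupport φ := subset_tsupport φ (by simp [hone.self_of_nhds])
      exact ⟨1, hone, hψφ.filter_mono (nhds_le_nhdsSet hzφ)⟩
  have hφa : IsHolomorphicNearSpectrum a φ :=
    isHolomorphicNearSpectrum_of_eventually_eq_const hφ hφc fun z hz ↦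
      (hconst z hz).imp fun _ hc ↦ hc.1
  have hψa : IsHolomorphicNearSpectrum a ψ :=
    isHolomorphicNearSpectrum_of_eventually_eq_const hψ hψc fun z hz ↦
      (hconst z hz).imp fun _ hc ↦ hc.2
  have hφψ : φ =ᶠ[𝓝ˢ (spectrum ℂ a)] ψ := by
    refine eventually_nhdsSet_iff_forall.2 fun z hz ↦ ?_
    obtain ⟨c, hφz, hψz⟩ := hconst z hz
    filter_upwards [hφz, hψz] with y hφy hψy
    rw [hφy, hψy]
  have hmul := hφa.holomorphicCalculus_mul_eq_left hψa hψφ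
  rwa [← hφa.holomorphicCalculus_congr hψa hφψ] at hmul

theorem exists_isIdempotentElem_zero_mem_spectrum_one_mem_spectrum {u v : Set ℂ}
    (hu : IsClosed u) (hv : IsClosed v) (huv : Disjoint u v) (hauv : spectrum ℂ a ⊆ u ∪ v)
    (hau : ¬spectrum ℂ a ⊆ u) (hav : ¬spectrum ℂ a ⊆ v) :
    ∃ e : A, IsIdempotentElem e ∧ 0 ∈ spectrum ℂ e ∧ 1 ∈ spectrum ℂ e := by
  obtain ⟨φ, hφ, hφc, hφv, hφu⟩ := exists_contDiff_hasCompactSupport_eventually_eq_one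
    ((spectrum.isCompact a).inter_right hu) hv.isOpen_compl
    (inter_subset_right.trans huv.subset_compl_right) 1
  have hone {z : ℂ} (hz : z ∈ spectrum ℂ a) (hzu : z ∈ u) : ∀ᶠ y in 𝓝 z, φ y = 1 :=
    hφu.filter_mono (nhds_le_nhdsSet (mem_inter hz hzu))
  have hzero {z : ℂ} (hz : z ∈ v) : ∀ᶠ y in 𝓝 z, φ y = 0 :=
    notMem_tsupport_iff_eventuallyEq.1 fun h ↦ hφv h hz
  have hφa : IsHolomorphicNearSpectrum a φ :=
    isHolomorphicNearSpectrum_of_eventually_eq_const hφ hφc fun z hz ↦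
      (hauv hz).elim (fun hzu ↦ ⟨1, hone hz hzu⟩) fun hzv ↦ ⟨0, hzero hzv⟩
  refine ⟨holomorphicCalculus a φ, ?_, ?_, ?_⟩
  · exact isIdempotentElem_holomorphicCalculus hφ hφc fun z hz ↦
      (hauv hz).symm.imp hzero (hone hz)
  · obtain ⟨z, hz, hzu⟩ := not_subset.1 hau
    rw [← (hzero ((hauv hz).resolve_left hzu)).self_of_nhds]
    exact hφa.apply_mem_spectrum_holomorphicCalculus hz
  · obtain ⟨z, hz, hzv⟩ := not_subset.1 hav
    rw [← (hone hz ((hauv hz).resolve_right hzv)).self_of_nhds]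
    exact hφa.apply_mem_spectrum_holomorphicCalculus hz

end Idempotents

/-- Let `A` be a (nontrivial) unital complex Banach algebra.  If `A` has no
nontrivial idempotents (every `a` with `a * a = a` is `0` or `1`), then the spectrum of every
element of `A` is a connected subset of `ℂ`. -/
theorem spectrum_isConnected_of_no_nontrivial_idempotents (A : Type*) [NormedRing A]
    [NormedAlgebra ℂ A] [CompleteSpace A] [Nontrivial A]
    (h : ∀ a : A, a * a = a → a = 0 ∨ a = 1) (a : A) :
    IsConnected (spectrum ℂ a) := by
  refine ⟨spectrum.nonempty a,
    (isPreconnected_iff_subset_of_fully_disjoint_closed (spectrum.isClosed a)).2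
      fun u v hu hv hauv huv ↦ ?_⟩
  by_contra! hsplit
  obtain ⟨e, he, he_zero, he_one⟩ :=
    exists_isIdempotentElem_zero_mem_spectrum_one_mem_spectrum hu hv huv hauv hsplit.1 hsplit.2
  rcases h e he with rfl | rfl
  · simp [spectrum.zero_eq] at he_one
  · simp [spectrum.one_eq] at he_zero
end

section
/- Let A be a unital complex Banach algebra and let F ⊆ A be a dense subset. If the spectrum sp(b) is a connected subset of ℂ for every b ∈ F, then A has no nontrivial idempotents. -/
/-!
For `b` near an idempotent `a`, upper semicontinuity of the spectrum puts `sp(b)` inside the union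
of the disjoint discs of radius `1/2` about `0` and `1`, so a connected `sp(b)` lies in only one of
them and the Riesz projection of `b` for the other disc vanishes. Riesz projections depend
continuously on the element, so the corresponding Riesz projection of `a` vanishes too; for the
discs about `1` and `0` these are `a` and `1 - a`.
-/

open Filter Metric Set Topology

section Resolvent

variable {𝕜 A : Type*} [NormedField 𝕜] [NormedRing A] [NormedAlgebra 𝕜 A] [CompleteSpace A]

theorem continuousAt_uncurry_resolvent {a : A} {k : 𝕜} (hk : k ∈ resolventSet 𝕜 a) :
    ContinuousAt (Function.uncurry resolvent) (a, k) :=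
  ContinuousAt.comp (f := fun p : A × 𝕜 ↦ algebraMap 𝕜 A p.2 - p.1) (g := Ring.inverse)
    (NormedRing.inverse_continuousAt hk.unit) (by fun_prop)

theorem continuousOn_resolvent (a : A) : ContinuousOn (resolvent a) (resolventSet 𝕜 a) :=
  fun _ hk ↦ ((continuousAt_uncurry_resolvent hk).comp
    (Continuous.prodMk_right a).continuousAt).continuousWithinAt

theorem eventually_spectrum_subset [ProperSpace 𝕜] {a : A} {U : Set 𝕜} (hU : IsOpen U)
    (ha : spectrum 𝕜 a ⊆ U) : ∀ᶠ b in 𝓝 a, spectrum 𝕜 b ⊆ U :=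
  (upperHemicontinuousAt_iff.1 (upperHemicontinuous_iff.1 (upperHemicontinuous_spectrum 𝕜 A) a) U
    (hU.mem_nhdsSet.2 ha)).mono fun _ ↦ subset_of_mem_nhdsSet

theorem eventually_subset_resolventSet [ProperSpace 𝕜] {a : A} {K : Set 𝕜} (hK : IsClosed K)
    (ha : K ⊆ resolventSet 𝕜 a) : ∀ᶠ b in 𝓝 a, K ⊆ resolventSet 𝕜 b :=
  (eventually_spectrum_subset hK.isOpen_compl (compl_subset_compl.2 ha)).mono
    fun _ ↦ compl_subset_compl.1

theorem tendstoUniformlyOn_resolvent [ProperSpace 𝕜] {a : A} {K : Set 𝕜} (hK : IsCompact K)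
    (ha : K ⊆ resolventSet 𝕜 a) : TendstoUniformlyOn resolvent (resolvent a) (𝓝 a) K := by
  have hcont : ContinuousOn (Function.uncurry resolvent) ({b : A | K ⊆ resolventSet 𝕜 b} ×ˢ K) :=
    fun _ hp ↦ (continuousAt_uncurry_resolvent (hp.1 hp.2)).continuousWithinAt
  intro u hu
  obtain ⟨v, hv, hvu⟩ := hK.mem_uniformity_of_prod hcont ha (symm_le_uniformity hu)
  rw [nhdsWithin_eq_nhds.2 (eventually_subset_resolventSet hK.isClosed ha)] at hv
  exact mem_of_superset hv hvu

theorem frequently_spectrum_subset_or_frequently_spectrum_subset [ProperSpace 𝕜] {a : A}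
    {U V : Set 𝕜} (hU : IsOpen U) (hV : IsOpen V) (hUV : Disjoint U V)
    (ha : spectrum 𝕜 a ⊆ U ∪ V) (h : a ∈ closure {b : A | IsPreconnected (spectrum 𝕜 b)}) :
    (∃ᶠ b in 𝓝 a, spectrum 𝕜 b ⊆ U) ∨ ∃ᶠ b in 𝓝 a, spectrum 𝕜 b ⊆ V := by
  rw [← frequently_or_distrib]
  refine ((mem_closure_iff_frequently.1 h).and_eventually
    (eventually_spectrum_subset (hU.union hV) ha)).mono ?_
  exact fun b ⟨hb, hsub⟩ ↦ hb.subset_or_subset hU hV hUV hsub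

end Resolvent

section Idempotent

variable {𝕜 A : Type*} [Field 𝕜] [Ring A] [Algebra 𝕜 A] {a : A}

theorem subset_resolventSet_of_isIdempotentElem (ha : IsIdempotentElem a) {s : Set 𝕜}
    (h₀ : 0 ∉ s) (h₁ : 1 ∉ s) : s ⊆ resolventSet 𝕜 a := by
  refine disjoint_compl_right_iff_subset.1 (Disjoint.mono_right (ha.spectrum_subset 𝕜) ?_)
  simp [h₀, h₁]

theorem resolvent_eq_of_isIdempotentElem (ha : IsIdempotentElem a) {z : 𝕜} (hz₀ : z ≠ 0)
    (hz₁ : z ≠ 1) : resolvent a z = z⁻¹ • (1 - a) + (z - 1)⁻¹ • a := by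
  have hz : z ∈ resolventSet 𝕜 a := singleton_subset_iff.1
    (subset_resolventSet_of_isIdempotentElem ha (by simpa using hz₀.symm) (by simpa using hz₁.symm))
  have decomp : algebraMap 𝕜 A z - a = z • (1 - a) + (z - 1) • a := by
    rw [Algebra.algebraMap_eq_smul_one]
    module
  have mul_eq_one : (algebraMap 𝕜 A z - a) * (z⁻¹ • (1 - a) + (z - 1)⁻¹ • a) = 1 := by
    simp only [decomp, mul_add, add_mul, smul_mul_smul_comm, ha.one_sub.eq, ha.eq,
      ha.mul_one_sub_self, ha.one_sub_mul_self, mul_inv_cancel₀ hz₀,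
      mul_inv_cancel₀ (sub_ne_zero.2 hz₁), smul_zero, one_smul, zero_add, add_zero, sub_add_cancel]
  rw [spectrum.resolvent_eq hz]
  exact (Units.eq_inv_of_mul_eq_one_left mul_eq_one).symm

end Idempotent

theorem circleIntegral_sub_inv_of_notMem_closedBall {c w : ℂ} {R : ℝ} (hR : 0 ≤ R)
    (hw : w ∉ closedBall c R) : ∮ z in C(c, R), (z - w)⁻¹ = 0 := by
  have hdiff : DifferentiableOn ℂ (fun z ↦ (z - w)⁻¹) {w}ᶜ :=
    (differentiableOn_id.sub_const w).fun_inv fun _ hz ↦ sub_ne_zero.2 hz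
  exact (hdiff.diffContOnCl_ball (subset_compl_singleton_iff.2 hw)).circleIntegral_eq_zero hR

section RieszProjection

variable {A : Type*} [NormedRing A] [NormedAlgebra ℂ A]

/-- The Riesz projection of `a` for the disc with centre `c` and radius `R`, which splits off the
part of the spectrum of `a` inside the disc. It is given by the contour integral of the resolvent,
and is meaningful only when the circle avoids the spectrum of `a`. -/
noncomputable def rieszProjection (a : A) (c : ℂ) (R : ℝ) : A :=
  (2 * Real.pi * Complex.I : ℂ)⁻¹ • ∮ z in C(c, R), resolvent a z

namespace rieszProjection

variable [CompleteSpace A] {a : A} {c : ℂ} {R : ℝ}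

theorem eq_zero_of_closedBall_subset_resolventSet (hR : 0 ≤ R)
    (h : closedBall c R ⊆ resolventSet ℂ a) : rieszProjection a c R = 0 := by
  have hdiff : DifferentiableOn ℂ (resolvent a) (resolventSet ℂ a) := fun z hz ↦
    (spectrum.hasDerivAt_resolvent_const_left hz).differentiableAt.differentiableWithinAt
  rw [rieszProjection, (hdiff.diffContOnCl_ball h).circleIntegral_eq_zero hR, smul_zero]

theorem continuousAt (hR : 0 ≤ R) (h : sphere c R ⊆ resolventSet ℂ a) :
    ContinuousAt (fun b ↦ rieszProjection b c R) a := by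
  have hcont : ∀ᶠ b in 𝓝 a, ContinuousOn (resolvent b) (sphere c R) :=
    (eventually_subset_resolventSet isClosed_sphere h).mono
      fun b hb ↦ (continuousOn_resolvent b).mono hb
  have hunif := tendstoUniformlyOn_resolvent (isCompact_sphere c R) h
  exact (hunif.tendsto_circleIntegral_of_continuousOn hR hcont).const_smul _

theorem eq_zero_of_frequently (hR : 0 ≤ R) (ha : sphere c R ⊆ resolventSet ℂ a)
    (h : ∃ᶠ b in 𝓝 a, closedBall c R ⊆ resolventSet ℂ b) : rieszProjection a c R = 0 :=
  tendsto_nhds_unique_of_frequently_eq (continuousAt hR ha) tendsto_const_nhds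
    (h.mono fun _ ↦ eq_zero_of_closedBall_subset_resolventSet hR)

theorem eq_of_isIdempotentElem (ha : IsIdempotentElem a) (hR : 0 ≤ R) (h₀ : 0 ∉ sphere c R)
    (h₁ : 1 ∉ sphere c R) :
    rieszProjection a c R = (2 * Real.pi * Complex.I : ℂ)⁻¹ •
      ((∮ z in C(c, R), (z - 0)⁻¹) • (1 - a) + (∮ z in C(c, R), (z - 1)⁻¹) • a) := by
  have integrable {w : ℂ} (hw : w ∉ sphere c R) (x : A) :
      CircleIntegrable (fun z ↦ (z - w)⁻¹ • x) c R := by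
    have hinv : ContinuousOn (fun z ↦ (z - w)⁻¹) (sphere c R) :=
      .inv₀ (by fun_prop) fun z hz ↦ sub_ne_zero.2 (ne_of_mem_of_not_mem hz hw)
    exact (hinv.smul continuousOn_const).circleIntegrable hR
  have hres : EqOn (resolvent a) (fun z ↦ (z - 0)⁻¹ • (1 - a) + (z - 1)⁻¹ • a) (sphere c R) :=
    fun z hz ↦ by
      simpa only [sub_zero] using resolvent_eq_of_isIdempotentElem ha
        (ne_of_mem_of_not_mem hz h₀) (ne_of_mem_of_not_mem hz h₁)
  rw [rieszProjection, circleIntegral.integral_congr hR hres,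
    circleIntegral.integral_add (integrable h₀ _) (integrable h₁ _),
    circleIntegral.integral_smul_const, circleIntegral.integral_smul_const]

theorem eq_one_sub_of_isIdempotentElem (ha : IsIdempotentElem a) (h₀ : 0 ∈ ball c R)
    (h₁ : 1 ∉ closedBall c R) : rieszProjection a c R = 1 - a := by
  have hR : 0 ≤ R := (pos_of_mem_ball h₀).le
  rw [eq_of_isIdempotentElem ha hR (sphere_disjoint_ball.notMem_of_mem_right h₀)
      (notMem_subset sphere_subset_closedBall h₁), circleIntegral.integral_sub_inv_of_mem_ball h₀,
    circleIntegral_sub_inv_of_notMem_closedBall hR h₁, zero_smul, add_zero,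
    inv_smul_smul₀ Complex.two_pi_I_ne_zero]

theorem eq_self_of_isIdempotentElem (ha : IsIdempotentElem a) (h₀ : 0 ∉ closedBall c R)
    (h₁ : 1 ∈ ball c R) : rieszProjection a c R = a := by
  have hR : 0 ≤ R := (pos_of_mem_ball h₁).le
  rw [eq_of_isIdempotentElem ha hR (notMem_subset sphere_subset_closedBall h₀)
      (sphere_disjoint_ball.notMem_of_mem_right h₁),
    circleIntegral.integral_sub_inv_of_mem_ball h₁,
    circleIntegral_sub_inv_of_notMem_closedBall hR h₀, zero_smul, zero_add,
    inv_smul_smul₀ Complex.two_pi_I_ne_zero]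

end rieszProjection

variable [CompleteSpace A] {a : A} {c : ℂ} {R : ℝ}

theorem eq_zero_of_frequently_closedBall_subset_resolventSet (ha : IsIdempotentElem a)
    (h₀ : 0 ∉ closedBall c R) (h₁ : 1 ∈ ball c R)
    (h : ∃ᶠ b in 𝓝 a, closedBall c R ⊆ resolventSet ℂ b) : a = 0 := by
  rw [← rieszProjection.eq_self_of_isIdempotentElem ha h₀ h₁]
  refine rieszProjection.eq_zero_of_frequently (pos_of_mem_ball h₁).le ?_ h
  exact subset_resolventSet_of_isIdempotentElem ha (notMem_subset sphere_subset_closedBall h₀)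
    (sphere_disjoint_ball.notMem_of_mem_right h₁)

theorem eq_one_of_frequently_closedBall_subset_resolventSet (ha : IsIdempotentElem a)
    (h₀ : 0 ∈ ball c R) (h₁ : 1 ∉ closedBall c R)
    (h : ∃ᶠ b in 𝓝 a, closedBall c R ⊆ resolventSet ℂ b) : a = 1 := by
  rw [eq_comm, ← sub_eq_zero, ← rieszProjection.eq_one_sub_of_isIdempotentElem ha h₀ h₁]
  refine rieszProjection.eq_zero_of_frequently (pos_of_mem_ball h₀).le ?_ h
  exact subset_resolventSet_of_isIdempotentElem ha (sphere_disjoint_ball.notMem_of_mem_right h₀)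
    (notMem_subset sphere_subset_closedBall h₁)

theorem no_nontrivial_idempotents_of_connected_spectra_general (ha : IsIdempotentElem a)
    (h : a ∈ closure {b : A | IsPreconnected (spectrum ℂ b)}) : a = 0 ∨ a = 1 := by
  have spectrum_subset : spectrum ℂ a ⊆ ball 0 (1 / 2) ∪ ball 1 (1 / 2) :=
    (ha.spectrum_subset ℂ).trans (by simp [insert_subset_iff])
  have closedBall_subset {b : A} {w c : ℂ} (hwc : dist c w = 1)
      (hb : spectrum ℂ b ⊆ ball w (1 / 2)) : closedBall c (1 / 2) ⊆ resolventSet ℂ b :=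
    disjoint_compl_right_iff_subset.1
      ((closedBall_disjoint_ball (by norm_num [hwc])).mono_right hb)
  rcases frequently_spectrum_subset_or_frequently_spectrum_subset isOpen_ball isOpen_ball
    (ball_disjoint_ball (by norm_num)) spectrum_subset h with near_zero | near_one
  · left
    exact eq_zero_of_frequently_closedBall_subset_resolventSet (c := 1) (R := 1 / 2) ha
      (by norm_num) (by norm_num) (near_zero.mono fun _ ↦ closedBall_subset (by simp))
  · right
    exact eq_one_of_frequently_closedBall_subset_resolventSet (c := 0) (R := 1 / 2) ha
      (by norm_num) (by norm_num) (near_one.mono fun _ ↦ closedBall_subset (by simp))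

end RieszProjection

/-- Let `A` be a unital complex Banach algebra and let `F ⊆ A` be a dense
subset.  If the spectrum of every element of `F` is a connected subset of `ℂ`, then `A` has no
nontrivial idempotents: every `a ∈ A` with `a * a = a` is `0` or `1`. -/
theorem no_nontrivial_idempotents_of_connected_spectra (A : Type*) [NormedRing A]
    [NormedAlgebra ℂ A] [CompleteSpace A] (F : Set A) (hF : Dense F)
    (h : ∀ b ∈ F, IsConnected (spectrum ℂ b)) :
    ∀ a : A, a * a = a → a = 0 ∨ a = 1 := by
  exact fun a ha ↦ no_nontrivial_idempotents_of_connected_spectra_general ha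
    (closure_mono (fun b hb ↦ (h b hb).isPreconnected) (hF a))
end
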